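/- For every natural number n ≥ 3 there exists a natural number M such that every finite family of at least M pairwise disjoint nonempty compact convex subsets of ℝ² that is in general position contains a subfamily of n sets in convex position. -/

import Mathlib

open Set

noncomputable section

/-- The Euclidean plane. -/
abbrev Plane : Type := EuclideanSpace ℝ (Fin 2)

/-- The 2×2 determinant of two plane vectors. -/
def det2 (u v : Plane) : ℝ := u 0 * v 1 - u 1 * v 0

/-- A convex body in the plane: nonempty, compact and convex. -/
def ConvexBody2 (A : Set Plane) : Prop := A.Nonempty ∧ IsCompact A ∧ Convex ℝ A

/-- A family of sets is in convex position if removing any member changes the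
convex hull of the union of the family. -/
def ConvexPos (F : Set (Set Plane)) : Prop :=
  ∀ A ∈ F, convexHull ℝ (⋃₀ F) ≠ convexHull ℝ (⋃₀ (F \ {A}))

/-- A family is in general position if every 3-element subfamily is in convex position. -/
def GenPos (F : Set (Set Plane)) : Prop :=
  ∀ G ⊆ F, G.ncard = 3 → ConvexPos G

/-- Two sets are noncrossing if both set differences are connected. -/
def NoncrossingPair (A B : Set Plane) : Prop := IsConnected (A \ B) ∧ IsConnected (B \ A)

/-- Two convex bodies are tangent if they intersect but their interiors are disjoint. -/
def TangentBodies (A B : Set Plane) : Prop :=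
  (A ∩ B).Nonempty ∧ interior A ∩ interior B = ∅

/-- The line `{x | f x = c}` (for `f ≠ 0`) is tangent to `A`:
it meets `A` and `A` lies in one of the two closed half-planes it bounds. -/
def TangentLineTo (f : Plane →ₗ[ℝ] ℝ) (c : ℝ) (A : Set Plane) : Prop :=
  (∃ x ∈ A, f x = c) ∧ ((∀ x ∈ A, f x ≤ c) ∨ (∀ x ∈ A, c ≤ f x))

/-- No line is tangent to three distinct members of the family. -/
def NoTripleTangentLine (F : Set (Set Plane)) : Prop :=
  ∀ f : Plane →ₗ[ℝ] ℝ, f ≠ 0 → ∀ c : ℝ, ∀ A ∈ F, ∀ B ∈ F, ∀ C ∈ F,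
    A ≠ B → B ≠ C → A ≠ C →
    ¬ (TangentLineTo f c A ∧ TangentLineTo f c B ∧ TangentLineTo f c C)

/-- The ordered triple `(A₁, A₂, A₃)` is counterclockwise oriented. -/
def CCWOriented (A₁ A₂ A₃ : Set Plane) : Prop :=
  ∃ a₁ ∈ A₁ ∩ frontier (convexHull ℝ (A₁ ∪ A₂ ∪ A₃)),
  ∃ a₂ ∈ A₂ ∩ frontier (convexHull ℝ (A₁ ∪ A₂ ∪ A₃)),
  ∃ a₃ ∈ A₃ ∩ frontier (convexHull ℝ (A₁ ∪ A₂ ∪ A₃)),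
    0 < det2 (a₂ - a₁) (a₃ - a₁)

/-- The ordered triple `(A₁, A₂, A₃)` is clockwise oriented. -/
def CWOriented (A₁ A₂ A₃ : Set Plane) : Prop :=
  ∃ a₁ ∈ A₁ ∩ frontier (convexHull ℝ (A₁ ∪ A₂ ∪ A₃)),
  ∃ a₂ ∈ A₂ ∩ frontier (convexHull ℝ (A₁ ∪ A₂ ∪ A₃)),
  ∃ a₃ ∈ A₃ ∩ frontier (convexHull ℝ (A₁ ∪ A₂ ∪ A₃)),
    det2 (a₂ - a₁) (a₃ - a₁) < 0

/-- An affine line in the plane: an affine subspace with 1-dimensional direction. -/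
def IsLine (L : AffineSubspace ℝ Plane) : Prop := Module.finrank ℝ L.direction = 1

/-- `L` is a transversal line of the family `F`. -/
def TransversalLine (L : AffineSubspace ℝ Plane) (F : Set (Set Plane)) : Prop :=
  IsLine L ∧ ∀ A ∈ F, ((L : Set Plane) ∩ A).Nonempty

/-!
Two disjoint bodies `A`, `B` can be strictly separated, so their support functions agree in exactly
two directions, and the directions in which `A` has the larger support form an open arc. List the
bodies as `K 1, K 2, …` by increasing support at angle `0`. For `i < j` the arc on which `K i`
dominates `K j` then avoids `0` and is an interval `(s i j, t i j)` of angles in `[0, 2π]`. General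
position exposes `K i` in each triple at a nonzero angle, which says that `s i j < t i k` for
`i < j, k`, and that `t j i < t i k` or `s i k < s j i` for `j < i < k`. By Ramsey's theorem for
triples, one of these two alternatives prevails throughout a large subfamily. There, for every `i`
but the last, the intervals `(s i k, t i k)`, `k > i`, have a common point lying to the right of all
`[s j i, t j i]`, `j < i`, or to the left of all of them: a direction in which `K i` is strictly
extreme. Hence the subfamily without its last member is in convex position.
-/

open scoped Finset Function

section Ramsey

universe u v

theorem monochromatic_insert {α : Type u} [DecidableEq α] {ι : Type v} {k : ℕ}
    {color : Finset α → ι} {i : ι} {x : α} {T : Finset α}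
    (hx : ∀ U ⊆ T, #U = k → color (insert x U) = i)
    (hT : ∀ U ⊆ T, #U = k + 1 → color U = i) :
    ∀ U ⊆ insert x T, #U = k + 1 → color U = i := by
  intro U hU hUk
  by_cases hxU : x ∈ U
  · rw [← Finset.insert_erase hxU]
    exact hx _ (Finset.subset_insert_iff.mp hU) (by rw [Finset.card_erase_of_mem hxU, hUk]; rfl)
  · exact hT U ((Finset.subset_insert_iff_of_notMem hxU).mp hU) hUk

theorem exists_ramsey_number {ι : Type v} [Finite ι] (k : ℕ) (m : ι → ℕ) :
    ∃ N : ℕ, ∀ {α : Type u} (color : Finset α → ι) (S : Finset α), N ≤ #S →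
      ∃ i, ∃ T ⊆ S, #T = m i ∧ ∀ U ⊆ T, #U = k → color U = i := by
  classical
  cases nonempty_fintype ι
  induction k generalizing m with
  | zero =>
    refine ⟨∑ i, m i, fun color S hS ↦ ?_⟩
    have hle : m (color ∅) ≤ #S :=
      (Finset.single_le_sum (fun i _ ↦ Nat.zero_le (m i)) (Finset.mem_univ _)).trans hS
    obtain ⟨T, hTS, hT⟩ := Finset.exists_subset_card_eq hle
    exact ⟨color ∅, T, hTS, hT, fun U _ hU ↦ by rw [Finset.card_eq_zero.mp hU]⟩
  | succ k ihk =>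
    induction m using WellFoundedLT.induction with
    | ind m ihm =>
    by_cases hm : ∃ i, m i = 0
    · obtain ⟨i, hi⟩ := hm
      refine ⟨0, fun color S _ ↦ ⟨i, ∅, Finset.empty_subset S, by simp [hi], fun U hU hUk ↦ ?_⟩⟩
      simp [Finset.subset_empty.mp hU] at hUk
    have hm_pos (i : ι) : 0 < m i := Nat.pos_of_ne_zero fun h ↦ hm ⟨i, h⟩
    have hlt (i : ι) : Function.update m i (m i - 1) < m := by
      simpa using Nat.sub_lt (hm_pos i) one_pos
    choose N hN using fun i ↦ ihm _ (hlt i)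
    obtain ⟨N', hN'⟩ := ihk N
    refine ⟨N' + 1, fun color S hS ↦ ?_⟩
    obtain ⟨x, hx⟩ : S.Nonempty := Finset.card_pos.mp (by lia)
    obtain ⟨i, V, hVS, hVN, hV⟩ := hN' (fun U ↦ color (insert x U)) (S.erase x)
      (by rw [Finset.card_erase_of_mem hx]; lia)
    obtain ⟨j, T, hTV, hTm, hT⟩ := hN i color V hVN.ge
    have hTS : T ⊆ S.erase x := hTV.trans hVS
    obtain rfl | hji := eq_or_ne j i
    · refine ⟨j, insert x T, Finset.insert_subset hx (hTS.trans (S.erase_subset x)), ?_,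
        monochromatic_insert (fun U hU ↦ hV U (hU.trans hTV)) hT⟩
      have hxT : x ∉ T := fun h ↦ Finset.notMem_erase x S (hTS h)
      rw [Finset.card_insert_of_notMem hxT, hTm, Function.update_self]
      exact Nat.sub_add_cancel (hm_pos j)
    · exact ⟨j, T, hTS.trans (S.erase_subset x), by rw [hTm, Function.update_of_ne hji], hT⟩

theorem eq_of_mem_triple_of_lt {α : Type*} [LinearOrder α] {a b c x y z : α} (hab : a < b)
    (hbc : b < c) (hx : x ∈ ({a, b, c} : Finset α)) (hy : y ∈ ({a, b, c} : Finset α))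
    (hz : z ∈ ({a, b, c} : Finset α)) (hxy : x < y) (hyz : y < z) : x = a ∧ y = b ∧ z = c := by
  simp only [Finset.mem_insert, Finset.mem_singleton] at hx hy hz
  grind

theorem exists_homogeneous_triples (n : ℕ) :
    ∃ N : ℕ, ∀ {α : Type u} [LinearOrder α] (r : α → α → α → Prop) (S : Finset α), N ≤ #S →
      ∃ T ⊆ S, #T = n ∧ ((∀ a ∈ T, ∀ b ∈ T, ∀ c ∈ T, a < b → b < c → r a b c) ∨
        ∀ a ∈ T, ∀ b ∈ T, ∀ c ∈ T, a < b → b < c → ¬ r a b c) := by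
  obtain ⟨N, hN⟩ := exists_ramsey_number.{u} 3 (fun _ : Prop ↦ n)
  refine ⟨N, fun {α} _ r S hS ↦ ?_⟩
  obtain ⟨p, T, hTS, hTn, hT⟩ :=
    hN (fun U ↦ ∃ a ∈ U, ∃ b ∈ U, ∃ c ∈ U, a < b ∧ b < c ∧ r a b c) S hS
  have hcolor : ∀ a ∈ T, ∀ b ∈ T, ∀ c ∈ T, a < b → b < c → (r a b c ↔ p) := by
    intro a ha b hb c hc hab hbc
    have hcard : #{a, b, c} = 3 :=
      Finset.card_eq_three.mpr ⟨a, b, c, hab.ne, (hab.trans hbc).ne, hbc.ne, rfl⟩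
    rw [← hT {a, b, c} (by simp [Finset.insert_subset_iff, ha, hb, hc]) hcard]
    refine ⟨fun h ↦ ⟨a, by simp, b, by simp, c, by simp, hab, hbc, h⟩, ?_⟩
    rintro ⟨x, hx, y, hy, z, hz, hxy, hyz, h⟩
    obtain ⟨rfl, rfl, rfl⟩ := eq_of_mem_triple_of_lt hab hbc hx hy hz hxy hyz
    exact h
  refine ⟨T, hTS, hTn, (em p).imp ?_ ?_⟩ <;>
    exact fun hp a ha b hb c hc hab hbc ↦ by simpa [hcolor a ha b hb c hc hab hbc] using hp

end Ramsey

section SupportFunction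

variable {E : Type*} [AddCommGroup E] [Module ℝ E] [TopologicalSpace E] {A B : Set E}

/-- The support function `f ↦ max_A f` of a set `A`, on the dual space. The supremum is attained
only for nonempty compact `A`. -/
def supportFun (A : Set E) (f : StrongDual ℝ E) : ℝ := sSup (f '' A)

theorem exists_mem_eq_supportFun (hA : IsCompact A) (hA₀ : A.Nonempty) (f : StrongDual ℝ E) :
    ∃ a ∈ A, f a = supportFun A f := by
  obtain ⟨a, ha, h⟩ := hA.exists_sSup_image_eq hA₀ f.continuous.continuousOn
  exact ⟨a, ha, h.symm⟩

theorem le_supportFun (hA : IsCompact A) (f : StrongDual ℝ E) {a : E} (ha : a ∈ A) :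
    f a ≤ supportFun A f :=
  le_csSup (hA.bddAbove_image f.continuous.continuousOn) (mem_image_of_mem f ha)

theorem supportFun_lt_iff (hA : IsCompact A) (hA₀ : A.Nonempty) {f : StrongDual ℝ E} {c : ℝ} :
    supportFun A f < c ↔ ∀ a ∈ A, f a < c := by
  refine ⟨fun h a ha ↦ (le_supportFun hA f ha).trans_lt h, fun h ↦ ?_⟩
  obtain ⟨a, ha, hmax⟩ := exists_mem_eq_supportFun hA hA₀ f
  exact hmax ▸ h a ha

theorem supportFun_smul [ContinuousConstSMul ℝ E] (A : Set E) {r : ℝ} (hr : 0 ≤ r)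
    (f : StrongDual ℝ E) : supportFun A (r • f) = r * supportFun A f := by
  simp only [supportFun, sSup_image', Real.mul_iSup_of_nonneg hr]
  rfl

theorem supportFun_lt_of_separated (hA : IsCompact A) (hA₀ : A.Nonempty) (hB : IsCompact B)
    (hB₀ : B.Nonempty) {f : StrongDual ℝ E} (hf : ∀ a ∈ A, ∀ b ∈ B, f a < f b) :
    supportFun A f < supportFun B f := by
  obtain ⟨b, hb⟩ := hB₀
  exact (supportFun_lt_iff hA hA₀).mpr fun a ha ↦ (hf a ha b hb).trans_le (le_supportFun hB f hb)

theorem supportFun_smul_sub_smul_lt (hA : IsCompact A) (hA₀ : A.Nonempty) (hB : IsCompact B)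
    (hB₀ : B.Nonempty) {f g : StrongDual ℝ E} (hf : ∀ a ∈ A, ∀ b ∈ B, f a < f b)
    (hg : supportFun B g ≤ supportFun A g) {c d : ℝ} (hc : 0 ≤ c) (hd : 0 < d) :
    supportFun B (c • g - d • f) < supportFun A (c • g - d • f) := by
  obtain ⟨a, ha, hga⟩ := exists_mem_eq_supportFun hA hA₀ g
  refine (supportFun_lt_iff hB hB₀).mpr fun b hb ↦ ?_
  have hba : g b ≤ g a := (le_supportFun hB g hb).trans (hg.trans_eq hga.symm)
  have hab : f a < f b := hf a ha b hb
  calc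
    (c • g - d • f) b = c * g b - d * f b := rfl
    _ < c * g a - d * f a :=
      by linarith [mul_le_mul_of_nonneg_left hba hc, mul_lt_mul_of_pos_left hab hd]
    _ = (c • g - d • f) a := rfl
    _ ≤ supportFun A (c • g - d • f) := le_supportFun hA _ ha

end SupportFunction

section ConvexHull

variable {E : Type*} [AddCommGroup E] [Module ℝ E] [TopologicalSpace E] [IsTopologicalAddGroup E]
  [ContinuousSMul ℝ E] {A B : Set E} {G : Set (Set E)}

theorem isCompact_convexJoin (hA : IsCompact A) (hB : IsCompact B) :
    IsCompact (convexJoin ℝ A B) := by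
  have himage : convexJoin ℝ A B =
      (fun p : (E × E) × ℝ ↦ (1 - p.2) • p.1.1 + p.2 • p.1.2) '' ((A ×ˢ B) ×ˢ Icc 0 1) := by
    ext x
    simp only [mem_convexJoin, segment_eq_image, mem_image, Prod.exists, mem_prod]
    grind
  rw [himage]
  exact ((hA.prod hB).prod isCompact_Icc).image (by fun_prop)

theorem isCompact_convexHull_sUnion (hG : G.Finite) (hcompact : ∀ B ∈ G, IsCompact B)
    (hconvex : ∀ B ∈ G, Convex ℝ B) : IsCompact (convexHull ℝ (⋃₀ G)) := by
  induction G, hG using Set.Finite.induction_on with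
  | empty => simp
  | @insert B G _ _ ih =>
    simp only [forall_mem_insert] at hcompact hconvex
    have ihG := ih hcompact.2 hconvex.2
    rw [sUnion_insert]
    obtain rfl | hB := B.eq_empty_or_nonempty
    · simpa using ihG
    obtain hG | hG := (⋃₀ G).eq_empty_or_nonempty
    · simpa [hG, hconvex.1.convexHull_eq] using hcompact.1
    · rw [convexHull_union hB hG, hconvex.1.convexHull_eq]
      exact isCompact_convexJoin hcompact.1 ihG

theorem not_subset_convexHull_sUnion_iff [T2Space E] [LocallyConvexSpace ℝ E] (hA : IsCompact A)
    (hA₀ : A.Nonempty) (hG : G.Finite) (hne : ∀ B ∈ G, B.Nonempty)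
    (hcompact : ∀ B ∈ G, IsCompact B) (hconvex : ∀ B ∈ G, Convex ℝ B) :
    ¬ A ⊆ convexHull ℝ (⋃₀ G) ↔
      ∃ f : StrongDual ℝ E, ∀ B ∈ G, supportFun B f < supportFun A f := by
  constructor
  · intro h
    obtain ⟨a, haA, ha⟩ := not_subset.mp h
    obtain ⟨f, c, hf, hfa⟩ := geometric_hahn_banach_closed_point (convex_convexHull ℝ _)
      (isCompact_convexHull_sUnion hG hcompact hconvex).isClosed ha
    refine ⟨f, fun B hB ↦ lt_of_lt_of_le ?_ (hfa.le.trans (le_supportFun hA f haA))⟩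
    exact (supportFun_lt_iff (hcompact B hB) (hne B hB)).mpr fun b hb ↦
      hf b (subset_convexHull ℝ _ (mem_sUnion_of_mem hb hB))
  · rintro ⟨f, hf⟩ hsub
    obtain ⟨a, haA, ha⟩ := exists_mem_eq_supportFun hA hA₀ f
    have hhull : convexHull ℝ (⋃₀ G) ⊆ {x | f x < f a} :=
      convexHull_min (sUnion_subset fun B hB b hb ↦
        (le_supportFun (hcompact B hB) f hb).trans_lt (ha ▸ hf B hB))
        (convex_halfSpace_lt f.isLinear _)
    exact lt_irrefl (f a) (hhull (hsub haA))

end ConvexHull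

section Direction

open Real

/-- The functional `⟪(cos θ, sin θ), ·⟫` on the plane, which stands for the unit vector at
angle `θ`. -/
def direction (θ : ℝ) : StrongDual ℝ Plane :=
  cos θ • EuclideanSpace.proj 0 + sin θ • EuclideanSpace.proj 1

theorem direction_apply (θ : ℝ) (x : Plane) : direction θ x = cos θ * x 0 + sin θ * x 1 := rfl

theorem continuous_uncurry_direction :
    Continuous (Function.uncurry fun (θ : ℝ) (x : Plane) ↦ direction θ x) := by
  simp only [Function.uncurry_def, direction_apply]
  fun_prop

theorem direction_periodic : Function.Periodic direction (2 * π) := fun θ ↦ by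
  simp [direction]

theorem direction_add_pi (θ : ℝ) : direction (θ + π) = -direction θ := by
  ext x
  simp [direction_apply, add_comm]

theorem sin_smul_direction (φ α β : ℝ) : sin (α - φ) • direction β =
    sin (β - φ) • direction α - sin (β - α) • direction φ := by
  ext x
  simp only [smul_apply, sub_apply, direction_apply, sin_sub, smul_eq_mul]
  ring

theorem exists_eq_smul_direction (f : StrongDual ℝ Plane) :
    ∃ r : ℝ, 0 ≤ r ∧ ∃ φ ∈ Ico 0 (2 * π), f = r • direction φ := by
  let z : ℂ := ⟨f (EuclideanSpace.single 0 1), f (EuclideanSpace.single 1 1)⟩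
  obtain ⟨φ, hφ, hdir⟩ := direction_periodic.exists_mem_Ico₀ two_pi_pos z.arg
  refine ⟨‖z‖, norm_nonneg z, φ, hφ, ?_⟩
  rw [← hdir]
  have hf (x : Plane) : f x = x 0 * z.re + x 1 * z.im := by
    have hx : x = x 0 • EuclideanSpace.single 0 1 + x 1 • EuclideanSpace.single 1 1 := by
      ext i
      fin_cases i <;> simp
    conv_lhs => rw [hx, map_add, map_smul, map_smul]
    rfl
  ext x
  rw [hf, smul_apply, direction_apply, smul_eq_mul,
    ← Complex.norm_mul_cos_arg z, ← Complex.norm_mul_sin_arg z]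
  ring

end Direction

section SupportAt

open Real

variable {A B : Set Plane}

/-- The support of a plane set in the direction of the unit vector at angle `θ`, which makes the
support function a `2π`-periodic function of a real variable. -/
def supportAt (A : Set Plane) (θ : ℝ) : ℝ := supportFun A (direction θ)

theorem continuous_supportAt (hA : IsCompact A) : Continuous (supportAt A) :=
  hA.continuous_sSup continuous_uncurry_direction

theorem supportAt_periodic (A : Set Plane) : Function.Periodic (supportAt A) (2 * π) :=
  direction_periodic.comp (supportFun A)

theorem exists_supportAt_lt_of_supportFun_lt {G : Set (Set Plane)} {f : StrongDual ℝ Plane}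
    (h : ∀ B ∈ G, supportFun B f < supportFun A f) :
    ∃ θ ∈ Ico 0 (2 * π), ∀ B ∈ G, supportAt B θ < supportAt A θ := by
  obtain ⟨r, hr, θ, hθ, rfl⟩ := exists_eq_smul_direction f
  refine ⟨θ, hθ, fun B hB ↦ ?_⟩
  have hlt := h B hB
  rw [supportFun_smul B hr, supportFun_smul A hr] at hlt
  exact lt_of_mul_lt_mul_left hlt hr

theorem exists_direction_separating (hA : ConvexBody2 A) (hB : ConvexBody2 B)
    (hAB : Disjoint A B) : ∃ φ, ∀ a ∈ A, ∀ b ∈ B, direction φ a < direction φ b := by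
  obtain ⟨f, u, v, hu, huv, hv⟩ :=
    geometric_hahn_banach_compact_closed hA.2.2 hA.2.1 hB.2.2 hB.2.1.isClosed hAB
  obtain ⟨r, hr, φ, -, rfl⟩ := exists_eq_smul_direction f
  exact ⟨φ, fun a ha b hb ↦ lt_of_mul_lt_mul_left (((hu a ha).trans huv).trans (hv b hb)) hr⟩

end SupportAt

section ConvexPosition

open Real

variable {F : Set (Set Plane)}

theorem convexPos_iff_not_subset :
    ConvexPos F ↔ ∀ A ∈ F, ¬ A ⊆ convexHull ℝ (⋃₀ (F \ {A})) := by
  refine forall₂_congr fun A hA ↦ not_congr ⟨fun h ↦ ?_, fun h ↦ ?_⟩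
  · exact h ▸ (subset_sUnion_of_mem hA).trans (subset_convexHull ℝ _)
  · refine (convexHull_min (sUnion_subset fun B hB ↦ ?_) (convex_convexHull ℝ _)).antisymm
      (convexHull_mono (sUnion_mono sdiff_subset))
    obtain rfl | hBA := eq_or_ne B A
    · exact h
    · exact (subset_sUnion_of_mem (S := F \ {A}) ⟨hB, hBA⟩).trans (subset_convexHull ℝ _)

theorem convexPos_iff_exists_supportAt_lt (hF : F.Finite) (hbody : ∀ A ∈ F, ConvexBody2 A) :
    ConvexPos F ↔
      ∀ A ∈ F, ∃ θ ∈ Ico 0 (2 * π), ∀ B ∈ F \ {A}, supportAt B θ < supportAt A θ := by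
  rw [convexPos_iff_not_subset]
  refine forall₂_congr fun A hA ↦ ?_
  rw [not_subset_convexHull_sUnion_iff (hbody A hA).2.1 (hbody A hA).1 hF.sdiff
    (fun B hB ↦ (hbody B hB.1).1) (fun B hB ↦ (hbody B hB.1).2.1)
    (fun B hB ↦ (hbody B hB.1).2.2)]
  exact ⟨fun ⟨_, hf⟩ ↦ exists_supportAt_lt_of_supportFun_lt hf, fun ⟨θ, _, h⟩ ↦ ⟨direction θ, h⟩⟩

theorem exists_supportAt_lt_of_genPos (hF : GenPos F) (hbody : ∀ A ∈ F, ConvexBody2 A)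
    {A B C : Set Plane} (hA : A ∈ F) (hB : B ∈ F) (hC : C ∈ F) (hAB : A ≠ B) (hAC : A ≠ C)
    (hBC : B ≠ C) (h₀ : supportAt A 0 ≤ supportAt B 0) :
    ∃ θ ∈ Ioo 0 (2 * π), supportAt B θ < supportAt A θ ∧ supportAt C θ < supportAt A θ := by
  have hsub : {A, B, C} ⊆ F := by simp [insert_subset_iff, hA, hB, hC]
  have hpos := hF _ hsub (ncard_eq_three.mpr ⟨A, B, C, hAB, hAC, hBC, rfl⟩)
  rw [convexPos_iff_exists_supportAt_lt (toFinite _) fun D hD ↦ hbody D (hsub hD)] at hpos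
  obtain ⟨θ, hθ, h⟩ := hpos A (by simp)
  have hBA := h B (by simp [hAB.symm])
  refine ⟨θ, ⟨hθ.1.lt_of_ne ?_, hθ.2⟩, hBA, h C (by simp [hAC.symm])⟩
  rintro rfl
  exact h₀.not_gt hBA

end ConvexPosition

section DominanceInterval

open Real

variable {A B : Set Plane}

theorem exists_unique_crossing {f g : ℝ → ℝ} {a b : ℝ} (hab : a ≤ b) (hf : Continuous f)
    (hg : Continuous g) (ha : f a < g a) (hb : g b < f b)
    (hfg : ∀ x ∈ Icc a b, ∀ y ∈ Icc a b, x < y → g x ≤ f x → g y < f y) :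
    ∃ p ∈ Ioo a b, f p = g p ∧ (∀ x ∈ Ico a p, f x < g x) ∧ ∀ x ∈ Ioc p b, g x < f x := by
  obtain ⟨p, hp, heq⟩ := isPreconnected_Icc.intermediate_value₂ (left_mem_Icc.mpr hab)
    (right_mem_Icc.mpr hab) hf.continuousOn hg.continuousOn ha.le hb.le
  refine ⟨p, ⟨hp.1.lt_of_ne ?_, hp.2.lt_of_ne ?_⟩, heq, fun x hx ↦ ?_, fun x hx ↦ ?_⟩
  · rintro rfl
    exact ha.ne heq
  · rintro rfl
    exact hb.ne' heq
  · by_contra! h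
    exact (hfg x ⟨hx.1, hx.2.le.trans hp.2⟩ p hp hx.2 h).ne' heq
  · exact hfg p hp x ⟨hp.1.trans hx.1.le, hx.2⟩ hx.1 heq.ge

theorem supportAt_lt_of_separated (hA : ConvexBody2 A) (hB : ConvexBody2 B) {φ α β : ℝ}
    (hφ : ∀ a ∈ A, ∀ b ∈ B, direction φ a < direction φ b) (hα : φ ≤ α) (hαβ : α < β)
    (hβ : β ≤ φ + π) (h : supportAt B α ≤ supportAt A α) :
    supportAt B β < supportAt A β := by
  have hφα : φ < α := hα.lt_of_ne <| by
    rintro rfl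
    exact h.not_gt (supportFun_lt_of_separated hA.2.1 hA.1 hB.2.1 hB.1 hφ)
  have hsin : 0 < sin (α - φ) := sin_pos_of_pos_of_lt_pi (by linarith) (by linarith)
  have hlt := supportFun_smul_sub_smul_lt hA.2.1 hA.1 hB.2.1 hB.1 hφ h
    (sin_nonneg_of_nonneg_of_le_pi (x := β - φ) (by linarith) (by linarith))
    (sin_pos_of_pos_of_lt_pi (x := β - α) (by linarith) (by linarith))
  rw [← sin_smul_direction, supportFun_smul _ hsin.le, supportFun_smul _ hsin.le] at hlt
  exact lt_of_mul_lt_mul_left hlt hsin.le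

theorem direction_add_pi_separating {φ : ℝ}
    (hφ : ∀ a ∈ A, ∀ b ∈ B, direction φ a < direction φ b) :
    ∀ b ∈ B, ∀ a ∈ A, direction (φ + π) b < direction (φ + π) a := fun b hb a ha ↦ by
  simpa [direction_add_pi] using hφ a ha b hb

theorem exists_supportAt_crossing (hA : ConvexBody2 A) (hB : ConvexBody2 B) {φ : ℝ}
    (hφ : ∀ a ∈ A, ∀ b ∈ B, direction φ a < direction φ b) :
    ∃ p ∈ Ioo φ (φ + π), supportAt A p = supportAt B p ∧
      (∀ θ ∈ Ico φ p, supportAt A θ < supportAt B θ) ∧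
      ∀ θ ∈ Ioc p (φ + π), supportAt B θ < supportAt A θ :=
  exists_unique_crossing (by linarith [pi_pos]) (continuous_supportAt hA.2.1)
    (continuous_supportAt hB.2.1) (supportFun_lt_of_separated hA.2.1 hA.1 hB.2.1 hB.1 hφ)
    (supportFun_lt_of_separated hB.2.1 hB.1 hA.2.1 hA.1 (direction_add_pi_separating hφ))
    fun _ hα _ hβ hαβ ↦ supportAt_lt_of_separated hA hB hφ hα.1 hαβ hβ.2

/-- The circle of directions splits into the open arc `(p, q)`, where `A` has larger support than
`B`, and the open arc `(q, p + 2π)`, where `B` has larger support than `A`. -/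
structure IsDominanceArc (A B : Set Plane) (p q : ℝ) : Prop where
  left_lt_right : p < q
  eq_left : supportAt A p = supportAt B p
  eq_right : supportAt A q = supportAt B q
  lt_of_mem : ∀ θ ∈ Ioo p q, supportAt B θ < supportAt A θ
  gt_of_mem : ∀ θ ∈ Ioo q (p + 2 * π), supportAt A θ < supportAt B θ

theorem exists_isDominanceArc (hA : ConvexBody2 A) (hB : ConvexBody2 B) (hAB : Disjoint A B) :
    ∃ p q, IsDominanceArc A B p q := by
  obtain ⟨φ, hφ⟩ := exists_direction_separating hA hB hAB
  obtain ⟨p, hp, hp_eq, hp_before, hp_after⟩ := exists_supportAt_crossing hA hB hφ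
  obtain ⟨q, hq, hq_eq, hq_before, hq_after⟩ :=
    exists_supportAt_crossing hB hA (direction_add_pi_separating hφ)
  refine ⟨p, q, hp.2.trans hq.1, hp_eq, hq_eq.symm, fun θ hθ ↦ ?_, fun θ hθ ↦ ?_⟩
  · obtain h | h := le_total θ (φ + π)
    · exact hp_after θ ⟨hθ.1, h⟩
    · exact hq_before θ ⟨h, hθ.2⟩
  · obtain h | h := le_total θ (φ + π + π)
    · exact hq_after θ ⟨hθ.1, h⟩
    · rw [← (supportAt_periodic A).sub_eq, ← (supportAt_periodic B).sub_eq]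
      exact hp_before _ ⟨by linarith, by linarith [hθ.2]⟩

theorem IsDominanceArc.add_zsmul {p q : ℝ} (h : IsDominanceArc A B p q) (k : ℤ) :
    IsDominanceArc A B (p + k • (2 * π)) (q + k • (2 * π)) := by
  have hshift (C : Set Plane) (θ : ℝ) : supportAt C (θ + k • (2 * π)) = supportAt C θ :=
    (supportAt_periodic C).zsmul k θ
  refine ⟨by linarith [h.left_lt_right], ?_, ?_, fun θ hθ ↦ ?_, fun θ hθ ↦ ?_⟩
  · simpa only [hshift] using h.eq_left
  · simpa only [hshift] using h.eq_right
  · rw [← sub_add_cancel θ (k • (2 * π)), hshift, hshift]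
    exact h.lt_of_mem _ ⟨by linarith [hθ.1], by linarith [hθ.2]⟩
  · rw [← sub_add_cancel θ (k • (2 * π)), hshift, hshift]
    exact h.gt_of_mem _ ⟨by linarith [hθ.1], by linarith [hθ.2]⟩

/-- The circle of directions, cut open at angle `0` outside the arc on which `A` dominates `B`:
among the angles in `(0, 2π)`, `A` has larger support than `B` exactly on `(s, t)`, and `B` has
larger support than `A` exactly outside `[s, t]`. In this form arcs of dominance of different pairs
can be compared by the order of their endpoints. -/
structure IsDominanceInterval (A B : Set Plane) (s t : ℝ) : Prop where
  nonneg_left : 0 ≤ s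
  left_lt_right : s < t
  right_le_two_pi : t ≤ 2 * π
  lt_iff_mem {θ : ℝ} : θ ∈ Ioo 0 (2 * π) → (supportAt B θ < supportAt A θ ↔ θ ∈ Ioo s t)
  gt_iff_notMem {θ : ℝ} : θ ∈ Ioo 0 (2 * π) → (supportAt A θ < supportAt B θ ↔ θ ∉ Icc s t)

theorem IsDominanceArc.isDominanceInterval {s t : ℝ} (h : IsDominanceArc A B s t) (hs : 0 ≤ s)
    (ht : t ≤ 2 * π) : IsDominanceInterval A B s t := by
  have hout {θ : ℝ} (hθ : θ ∈ Ioo 0 (2 * π)) (hst : θ ∉ Icc s t) :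
      supportAt A θ < supportAt B θ := by
    obtain hlt | hle := lt_or_ge θ s
    · rw [← supportAt_periodic A, ← supportAt_periodic B]
      exact h.gt_of_mem _ ⟨by linarith [hθ.1], by linarith⟩
    · exact h.gt_of_mem θ ⟨not_le.mp fun hle' ↦ hst ⟨hle, hle'⟩, by linarith [hθ.2]⟩
  have hle {θ : ℝ} (hst : θ ∈ Icc s t) : supportAt B θ ≤ supportAt A θ := by
    obtain rfl | rfl | hmem := eq_endpoints_or_mem_Ioo_of_mem_Icc hst
    exacts [h.eq_left.ge, h.eq_right.ge, (h.lt_of_mem θ hmem).le]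
  refine ⟨hs, h.left_lt_right, ht, fun {θ} hθ ↦ ⟨fun hlt ↦ ?_, h.lt_of_mem θ⟩,
    fun hθ ↦ ⟨fun hgt hst ↦ hgt.not_ge (hle hst), hout hθ⟩⟩
  by_contra hst
  by_cases hst' : θ ∈ Icc s t
  · obtain rfl | rfl | hmem := eq_endpoints_or_mem_Ioo_of_mem_Icc hst'
    exacts [hlt.ne' h.eq_left, hlt.ne' h.eq_right, hst hmem]
  · exact hlt.asymm (hout hθ hst')

theorem exists_isDominanceInterval (hA : ConvexBody2 A) (hB : ConvexBody2 B)
    (hAB : Disjoint A B) (h₀ : supportAt A 0 ≤ supportAt B 0) :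
    ∃ s t, IsDominanceInterval A B s t := by
  obtain ⟨p, q, hpq⟩ := exists_isDominanceArc hA hB hAB
  obtain ⟨k, hk, -⟩ := existsUnique_add_zsmul_mem_Ico two_pi_pos p 0
  have harc := hpq.add_zsmul k
  refine ⟨_, _, harc.isDominanceInterval hk.1 ?_⟩
  by_contra! hlt
  have h := harc.lt_of_mem (2 * π) ⟨by linarith [hk.2], hlt⟩
  rw [(supportAt_periodic A).eq, (supportAt_periodic B).eq] at h
  exact h₀.not_gt h

end DominanceInterval

section Homogeneous

open Real

variable {A B C : Set Plane} {s t s' t' θ : ℝ}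

theorem IsDominanceInterval.left_lt_right_of_supportAt_lt (hAB : IsDominanceInterval A B s t)
    (hAC : IsDominanceInterval A C s' t') (hθ : θ ∈ Ioo 0 (2 * π))
    (hB : supportAt B θ < supportAt A θ) (hC : supportAt C θ < supportAt A θ) : s < t' :=
  ((hAB.lt_iff_mem hθ).mp hB).1.trans ((hAC.lt_iff_mem hθ).mp hC).2

theorem IsDominanceInterval.left_lt_left_or_right_lt_right (hBA : IsDominanceInterval B A s t)
    (hAC : IsDominanceInterval A C s' t') (hθ : θ ∈ Ioo 0 (2 * π))
    (hB : supportAt B θ < supportAt A θ) (hC : supportAt C θ < supportAt A θ) :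
    s' < s ∨ t < t' := by
  have hmem := (hAC.lt_iff_mem hθ).mp hC
  obtain h | h := not_and_or.mp ((hBA.gt_iff_notMem hθ).mp hB)
  · exact .inl (hmem.1.trans (not_le.mp h))
  · exact .inr ((not_le.mp h).trans hmem.2)

theorem exists_forall_mem_Ioo_forall_notMem_Icc {ι α : Type*} [LinearOrder α] [DenselyOrdered α]
    [NoMinOrder α] [NoMaxOrder α] [Nonempty α] {L U : Finset ι} {s t a b : ι → α}
    (hU : ∀ j ∈ U, ∀ k ∈ U, a j < b k)
    (hLU : (∀ j ∈ L, ∀ k ∈ U, t j < b k) ∨ ∀ j ∈ L, ∀ k ∈ U, a k < s j) :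
    ∃ x, (∀ k ∈ U, x ∈ Ioo (a k) (b k)) ∧ ∀ j ∈ L, x ∉ Icc (s j) (t j) := by
  classical
  obtain h | h := hLU
  · obtain ⟨x, hlo, hhi⟩ := Order.exists_between_finsets (U.image a ∪ L.image t) (U.image b) (by
      simp only [Finset.mem_union, Finset.mem_image]
      grind)
    simp only [Finset.mem_union, Finset.mem_image] at hlo hhi
    exact ⟨x, fun k hk ↦ ⟨hlo _ (.inl ⟨k, hk, rfl⟩), hhi _ ⟨k, hk, rfl⟩⟩,
      fun j hj hx ↦ hx.2.not_gt (hlo _ (.inr ⟨j, hj, rfl⟩))⟩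
  · obtain ⟨x, hlo, hhi⟩ := Order.exists_between_finsets (U.image a) (U.image b ∪ L.image s) (by
      simp only [Finset.mem_union, Finset.mem_image]
      grind)
    simp only [Finset.mem_union, Finset.mem_image] at hlo hhi
    exact ⟨x, fun k hk ↦ ⟨hlo _ ⟨k, hk, rfl⟩, hhi _ (.inl ⟨k, hk, rfl⟩)⟩,
      fun j hj hx ↦ hx.1.not_gt (hhi _ (.inr ⟨j, hj, rfl⟩))⟩

theorem exists_supportAt_lt_of_homogeneous {ι : Type*} [LinearOrder ι] {K : ι → Set Plane}
    {s t : ι → ι → ℝ} {T : Finset ι} {i : ι}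
    (hst : ∀ i j, i < j → IsDominanceInterval (K i) (K j) (s i j) (t i j))
    (hmax : ∃ k ∈ T, i < k) (hright : ∀ j ∈ T, ∀ k ∈ T, i < j → i < k → s i j < t i k)
    (hhom : (∀ j ∈ T, ∀ k ∈ T, j < i → i < k → t j i < t i k) ∨
      ∀ j ∈ T, ∀ k ∈ T, j < i → i < k → s i k < s j i) :
    ∃ θ ∈ Ioo 0 (2 * π), ∀ j ∈ T, j ≠ i → supportAt (K j) θ < supportAt (K i) θ := by
  obtain ⟨θ, habove, hbelow⟩ :=
    exists_forall_mem_Ioo_forall_notMem_Icc (L := {j ∈ T | j < i}) (U := {k ∈ T | i < k})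
      (s := (s · i)) (t := (t · i)) (a := s i) (b := t i) (by grind) (by grind)
  simp only [Finset.mem_filter, and_imp] at habove hbelow
  obtain ⟨k, hk, hik⟩ := hmax
  have hθ : θ ∈ Ioo 0 (2 * π) := ⟨(hst i k hik).nonneg_left.trans_lt (habove k hk hik).1,
    (habove k hk hik).2.trans_le (hst i k hik).right_le_two_pi⟩
  refine ⟨θ, hθ, fun j hj hji ↦ ?_⟩
  obtain hlt | hgt := hji.lt_or_gt
  · exact ((hst j i hlt).gt_iff_notMem hθ).mpr (hbelow j hj hlt)
  · exact ((hst i j hgt).lt_iff_mem hθ).mpr (habove j hj hgt)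

end Homogeneous

section ErdosSzekeres

open Real

theorem exists_supportAt_lt_of_genPos_range {ι : Type*} [LinearOrder ι] {K : ι → Set Plane}
    (hbody : ∀ i, ConvexBody2 (K i)) (hdisj : Pairwise (Disjoint on K)) (hgen : GenPos (range K))
    (hmono : Monotone fun i ↦ supportAt (K i) 0) {i j k : ι} (hij : i ≠ j) (hik : i < k)
    (hjk : j ≠ k) :
    ∃ θ ∈ Ioo 0 (2 * π), supportAt (K j) θ < supportAt (K i) θ ∧
      supportAt (K k) θ < supportAt (K i) θ := by
  have hne {i j : ι} (hij : i ≠ j) : K i ≠ K j := (hdisj hij).ne (hbody i).1.ne_empty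
  obtain ⟨θ, hθ, hk, hj⟩ := exists_supportAt_lt_of_genPos hgen (forall_mem_range.mpr hbody)
    (mem_range_self i) (mem_range_self k) (mem_range_self j) (hne hik.ne) (hne hij)
    (hne hjk.symm) (hmono hik.le)
  exact ⟨θ, hθ, hj, hk⟩

theorem exists_convexPos_image_of_monotone (n : ℕ) :
    ∃ M : ℕ, ∀ K : Fin M → Set Plane, (∀ i, ConvexBody2 (K i)) → Pairwise (Disjoint on K) →
      GenPos (range K) → (Monotone fun i ↦ supportAt (K i) 0) →
      ∃ T : Finset (Fin M), #T = n ∧ ConvexPos (K '' T) := by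
  obtain ⟨M, hM⟩ := exists_homogeneous_triples (n + 1)
  refine ⟨M, fun K hbody hdisj hgen hmono ↦ ?_⟩
  choose! s t hst using fun i j (hij : i < j) ↦
    exists_isDominanceInterval (hbody i) (hbody j) (hdisj hij.ne) (hmono hij.le)
  obtain ⟨T, -, hTn, hT⟩ := hM (fun j i k ↦ t j i < t i k) Finset.univ (by simp)
  have hright (i j k : Fin M) (hij : i < j) (hik : i < k) : s i j < t i k := by
    obtain rfl | hjk := eq_or_ne j k
    · exact (hst i j hij).left_lt_right
    · obtain ⟨θ, hθ, hj, hk⟩ :=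
        exists_supportAt_lt_of_genPos_range hbody hdisj hgen hmono hij.ne hik hjk
      exact (hst i j hij).left_lt_right_of_supportAt_lt (hst i k hik) hθ hj hk
  have hside (j i k : Fin M) (hji : j < i) (hik : i < k) : s i k < s j i ∨ t j i < t i k := by
    obtain ⟨θ, hθ, hj, hk⟩ := exists_supportAt_lt_of_genPos_range hbody hdisj hgen hmono
      hji.ne' hik (hji.trans hik).ne
    exact (hst j i hji).left_lt_left_or_right_lt_right (hst i k hik) hθ hj hk
  have hT₀ : T.Nonempty := Finset.card_pos.mp (by lia)
  refine ⟨T.erase (T.max' hT₀), ?_, ?_⟩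
  · rw [Finset.card_erase_of_mem (T.max'_mem hT₀), hTn, Nat.add_sub_cancel]
  rw [convexPos_iff_exists_supportAt_lt (toFinite _) (forall_mem_image.mpr fun i _ ↦ hbody i)]
  refine forall_mem_image.mpr fun i hi ↦ ?_
  obtain ⟨hi_ne, hiT⟩ := Finset.mem_erase.mp hi
  have hhom : (∀ j ∈ T, ∀ k ∈ T, j < i → i < k → t j i < t i k) ∨
      ∀ j ∈ T, ∀ k ∈ T, j < i → i < k → s i k < s j i :=
    hT.imp (fun h j hj k hk ↦ h j hj i hiT k hk) fun h j hj k hk hji hik ↦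
      (hside j i k hji hik).resolve_right (h j hj i hiT k hk hji hik)
  obtain ⟨θ, hθ, hexposed⟩ := exists_supportAt_lt_of_homogeneous hst
    ⟨_, T.max'_mem hT₀, (T.le_max' i hiT).lt_of_ne hi_ne⟩ (fun j _ k _ ↦ hright i j k) hhom
  refine ⟨θ, Ioo_subset_Ico_self hθ, ?_⟩
  rintro _ ⟨⟨j, hj, rfl⟩, hji⟩
  exact hexposed j (Finset.mem_of_mem_erase hj) fun h ↦ hji (congrArg K h)

theorem exists_monotone_enumeration {α β : Type*} [LinearOrder β] (f : α → β) {F : Set α} {M : ℕ}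
    (h : (M : ℕ∞) ≤ F.encard) :
    ∃ e : Fin M → α, Function.Injective e ∧ (∀ i, e i ∈ F) ∧ Monotone (f ∘ e) := by
  obtain ⟨G, hGF, hG⟩ := exists_subset_encard_eq h
  have : Finite G := finite_of_encard_eq_coe hG
  have hcard : Nat.card G = M := by
    rw [Nat.card_coe_set_eq, ncard, hG, ENat.toNat_natCast]
  let enum : Fin M ≃ G := (Finite.equivFinOfCardEq hcard).symm
  let e : Fin M → α := fun i ↦ enum i
  refine ⟨e ∘ Tuple.sort (f ∘ e), ?_, fun i ↦ hGF (enum _).2, Tuple.monotone_sort (f ∘ e)⟩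
  exact (Subtype.val_injective.comp enum.injective).comp (Equiv.injective _)

theorem erdos_szekeres_disjoint_bodies_general (n : ℕ) :
    ∃ M : ℕ, ∀ F : Set (Set Plane), (M : ℕ∞) ≤ F.encard →
      (∀ A ∈ F, ConvexBody2 A) → F.Pairwise Disjoint → GenPos F →
      ∃ G ⊆ F, G.encard = n ∧ ConvexPos G := by
  obtain ⟨M, hM⟩ := exists_convexPos_image_of_monotone n
  refine ⟨M, fun F hF hbody hdisj hgen ↦ ?_⟩
  obtain ⟨K, hinj, hK, hmono⟩ := exists_monotone_enumeration (supportAt · 0) hF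
  have hKF : range K ⊆ F := range_subset_iff.mpr hK
  obtain ⟨T, hTn, hT⟩ := hM K (fun i ↦ hbody _ (hK i))
    (fun i j hij ↦ hdisj (hK i) (hK j) (hinj.ne hij)) (fun G hG ↦ hgen G (hG.trans hKF)) hmono
  refine ⟨K '' T, (image_subset_range K _).trans hKF, ?_, hT⟩
  rw [hinj.encard_image, encard_coe_eq_coe_finsetCard, hTn]

end ErdosSzekeres

/-- Bisztriczky–Fejes Tóth: Erdős–Szekeres for disjoint convex bodies. -/
theorem erdos_szekeres_disjoint_bodies :
    ∀ n : ℕ, 3 ≤ n → ∃ M : ℕ, ∀ F : Set (Set Plane), F.Finite → M ≤ F.ncard →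
      (∀ A ∈ F, ConvexBody2 A) → F.Pairwise Disjoint → GenPos F →
      ∃ G ⊆ F, G.ncard = n ∧ ConvexPos G := by
  intro n _
  obtain ⟨M, hM⟩ := erdos_szekeres_disjoint_bodies_general n
  refine ⟨M, fun F hF hcard hbody hdisj hgen ↦ ?_⟩
  obtain ⟨G, hGF, hGn, hG⟩ := hM F (hF.cast_ncard_eq ▸ mod_cast hcard) hbody hdisj hgen
  exact ⟨G, hGF, by rw [ncard, hGn, ENat.toNat_natCast], hG⟩
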